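/- arXiv:1404.3821 — 3 statements merged into one kernel-verified Lean document; each statement's English description precedes it below -/
import Mathlib

section
/- Let 𝓓 = (Ω, 𝓑) be a design with parameter (v, k, d) and b = |𝓑|. Then for every integer i with 1 ≤ i ≤ (v−d+1)/2, the inequality C(v, d+2i−1) ≥ b·∑_{j=0}^{i−1} C(k, d+2i−1−j)·C(v−k, j) holds, i.e. C(v, d+2i−1) ≥ b·( C(k, d+2i−1) + C(k, d+2i−2)·C(v−k, 1) + ⋯ + C(k, d+i)·C(v−k, i−1) ). -/
open Finset

variable {α : Type*} [Fintype α] [DecidableEq α]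

/-- `𝓑` is a design on the finite type `α` of cardinality `v`, with block size `k` and
maximal pairwise block intersection size `d`. -/
def IsDesign (𝓑 : Finset (Finset α)) (v k d : ℕ) : Prop :=
  Fintype.card α = v ∧ 2 ≤ 𝓑.card ∧ d < k ∧ k < v ∧
  (∀ B ∈ 𝓑, B.card = k) ∧
  (∀ B ∈ 𝓑, ∀ C ∈ 𝓑, B ≠ C → (B ∩ C).card ≤ d) ∧
  (∃ B ∈ 𝓑, ∃ C ∈ 𝓑, B ≠ C ∧ (B ∩ C).card = d)

/-- `𝓑` is a `β(i)` design with parameters `(v, k, d)`: a design such that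
`1 ≤ i ≤ (v - d + 1)/2` and every `(d + 2i - 1)`-element subset `X` of `Ω` admits a
unique block `B` with `|X ∩ B| ≥ d + i`. -/
def IsBetaDesign (𝓑 : Finset (Finset α)) (v k d i : ℕ) : Prop :=
  IsDesign 𝓑 v k d ∧ 1 ≤ i ∧ 2 * i ≤ v - d + 1 ∧
  ∀ X : Finset α, X.card = d + 2 * i - 1 →
    ∃! B, B ∈ 𝓑 ∧ d + i ≤ (X ∩ B).card

/-
Attach to each block `B` the `n`-subsets of `Ω` having fewer than `i` points outside `B`. If such an
`X` belongs to two blocks `B` and `C`, then `X ⊆ (X \ B) ∪ (X \ C) ∪ (B ∩ C)` has at most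
`2(i - 1) + d` points, which is impossible for `n ≥ d + 2i - 1`. So the families of distinct blocks
are disjoint, and their sizes add up to at most `C(v, n)`.
-/

/-- The `n`-subsets of `α` with fewer than `i` points outside `B`. When `n = d + 2i - 1`, these are
the `X` with `d + i ≤ |X ∩ B|`, as in `IsBetaDesign`; counting the points outside `B` avoids
subtraction. -/
def nearSubsets (B : Finset α) (n i : ℕ) : Finset (Finset α) :=
  {X ∈ powersetCard n univ | #(X \ B) < i}

theorem mem_nearSubsets {B X : Finset α} {n i : ℕ} :
    X ∈ nearSubsets B n i ↔ #X = n ∧ #(X \ B) < i := by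
  simp [nearSubsets]

theorem card_filter_card_sdiff_eq (B : Finset α) {n j : ℕ} (hj : j ≤ n) :
    #{X ∈ powersetCard n univ | #(X \ B) = j} =
      (#B).choose (n - j) * (Fintype.card α - #B).choose j := by
  rw [← card_compl, ← card_powersetCard, ← card_powersetCard, ← card_product]
  refine card_nbij' (fun X => (X ∩ B, X \ B)) (fun p => p.1 ∪ p.2) ?_ ?_ ?_ ?_
  · intro X hX
    simp only [coe_filter, mem_powersetCard_univ, Set.mem_ofPred_eq] at hX
    have hsplit : #(X ∩ B) + #(X \ B) = #X := card_inter_add_card_sdiff X B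
    simp only [coe_product, Set.mem_prod, mem_coe, mem_powersetCard]
    exact ⟨⟨inter_subset_right, by omega⟩, subset_compl_iff_disjoint_right.2 sdiff_disjoint, hX.2⟩
  · rintro ⟨S, T⟩ hST
    simp only [coe_product, Set.mem_prod, mem_coe, mem_powersetCard] at hST
    obtain ⟨⟨hS, hSn⟩, hT, hTj⟩ := hST
    have hdisj : Disjoint S T := disjoint_compl_right.mono hS hT
    have hsdiff : (S ∪ T) \ B = T := by grind [mem_compl]
    simp only [coe_filter, mem_powersetCard_univ, Set.mem_ofPred_eq]
    rw [hsdiff, card_union_of_disjoint hdisj]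
    omega
  · exact fun X _ => sup_inf_sdiff X B
  · rintro ⟨S, T⟩ hST
    simp only [coe_product, Set.mem_prod, mem_coe, mem_powersetCard] at hST
    simp only [Prod.mk.injEq]
    grind [mem_compl]

theorem card_nearSubsets (B : Finset α) {n i : ℕ} (hi : i ≤ n + 1) :
    #(nearSubsets B n i) =
      ∑ j ∈ range i, (#B).choose (n - j) * (Fintype.card α - #B).choose j := by
  rw [card_eq_sum_card_fiberwise (f := fun X => #(X \ B)) (t := range i)
    fun X hX => mem_coe.2 (mem_range.2 (mem_nearSubsets.1 hX).2)]
  refine sum_congr rfl fun j hj => ?_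
  have hji : j < i := mem_range.1 hj
  rw [← card_filter_card_sdiff_eq B (by omega : j ≤ n), nearSubsets, filter_filter]
  congr 1
  exact filter_congr fun X _ => and_iff_right_of_imp fun h => h ▸ hji

theorem disjoint_nearSubsets {B C : Finset α} {d n i : ℕ} (hBC : #(B ∩ C) ≤ d)
    (hn : d + 2 * i ≤ n + 1) : Disjoint (nearSubsets B n i) (nearSubsets C n i) := by
  refine disjoint_left.2 fun X hB hC => ?_
  obtain ⟨hX, hXB⟩ := mem_nearSubsets.1 hB
  obtain ⟨-, hXC⟩ := mem_nearSubsets.1 hC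
  have hcover : X ⊆ (X \ B) ∪ (X \ C) ∪ (B ∩ C) := by grind
  have hcard : #X ≤ #(X \ B) + #(X \ C) + #(B ∩ C) := by
    grw [card_le_card hcover, card_union_le, card_union_le]
  omega

theorem block_number_bound_general (𝓑 : Finset (Finset α)) {d n i : ℕ}
    (hd : (𝓑 : Set (Finset α)).Pairwise fun B C => #(B ∩ C) ≤ d) (hn : d + 2 * i ≤ n + 1) :
    ∑ B ∈ 𝓑, ∑ j ∈ range i, (#B).choose (n - j) * (Fintype.card α - #B).choose j ≤
      (Fintype.card α).choose n := by
  have hdisj : (𝓑 : Set (Finset α)).PairwiseDisjoint (nearSubsets · n i) :=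
    hd.imp fun _ _ hBC => disjoint_nearSubsets hBC hn
  calc
    _ = ∑ B ∈ 𝓑, #(nearSubsets B n i) :=
      sum_congr rfl fun B _ => (card_nearSubsets B (by omega)).symm
    _ = #(𝓑.biUnion (nearSubsets · n i)) := (card_biUnion hdisj).symm
    _ ≤ #(powersetCard n (univ : Finset α)) :=
      card_le_card (biUnion_subset.2 fun _ _ => filter_subset _ _)
    _ = (Fintype.card α).choose n := by rw [card_powersetCard, card_univ]

/-- **Proposition 0 (inequality).** For a design `𝓑` with parameter `(v, k, d)` and
`b = |𝓑|`, for every integer `i` with `1 ≤ i ≤ (v - d + 1)/2`,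
`C(v, d+2i-1) ≥ b • ∑_{j=0}^{i-1} C(k, d+2i-1-j) C(v-k, j)`. -/
theorem block_number_bound (𝓑 : Finset (Finset α)) (v k d : ℕ)
    (hD : IsDesign 𝓑 v k d) (i : ℕ) (hi1 : 1 ≤ i) (hi2 : 2 * i ≤ v - d + 1) :
    𝓑.card * ∑ j ∈ Finset.range i, (k.choose (d + 2 * i - 1 - j)) * ((v - k).choose j)
      ≤ v.choose (d + 2 * i - 1) := by
  obtain ⟨rfl, -, -, -, hk, hd, -⟩ := hD
  rw [← smul_eq_mul, ← sum_const, sum_congr rfl fun B hB => by rw [← hk B hB]]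
  exact block_number_bound_general 𝓑 (fun B hB C hC => hd B hB C hC) (by omega)
end

section
/- Let 𝓓 = (Ω, 𝓑) be a design with parameter (v, k, d), b = |𝓑|, and let i be an integer with 1 ≤ i ≤ (v−d+1)/2. Then equality C(v, d+2i−1) = b·∑_{j=0}^{i−1} C(k, d+2i−1−j)·C(v−k, j) holds if and only if for every (d+2i−1)-element subset X of Ω there exists a block B ∈ 𝓑 with |X ∩ B| ≥ d+i (such a block is then necessarily unique). -/
open Finset

variable {α : Type*} [Fintype α] [DecidableEq α]

/-!
Splitting `X` into `X ∩ B` and `X \ B` counts the `m`-subsets `X` meeting a block `B` in at least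
`t` points. If any two blocks meet in fewer than `2 * t - m` points, then no `m`-subset meets two
blocks in `t` points each, so these classes of subsets are disjoint for distinct blocks. Hence
their sizes add up to the number of all `m`-subsets exactly when they exhaust them.
-/

lemma card_eq_sum_card_iff_of_pairwiseDisjoint {β ι : Type*} {I : Finset ι} {S : Finset β}
    {F : ι → Finset β} (hF : (I : Set ι).PairwiseDisjoint F) (hS : ∀ a ∈ I, F a ⊆ S) :
    #S = ∑ a ∈ I, #(F a) ↔ ∀ x ∈ S, ∃ a ∈ I, x ∈ F a := by
  classical
  have hsub : I.biUnion F ⊆ S := biUnion_subset.mpr hS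
  calc #S = ∑ a ∈ I, #(F a)
      ↔ #S ≤ #(I.biUnion F) := by
        rw [← card_biUnion hF]
        exact ⟨Eq.le, fun h ↦ h.antisymm (card_le_card hsub)⟩
    _ ↔ S ⊆ I.biUnion F := by
        rw [eq_iff_card_le_of_subset hsub]
        exact ⟨fun h ↦ h.superset, hsub.antisymm⟩
    _ ↔ ∀ x ∈ S, ∃ a ∈ I, x ∈ F a := by simp only [subset_iff, mem_biUnion]

section Counting

variable {β : Type*} [DecidableEq β]

lemma card_filter_powerset_card_inter_card_sdiff (s B : Finset β) (a c : ℕ) :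
    #{X ∈ s.powerset | #(X ∩ B) = a ∧ #(X \ B) = c} =
      (#(s ∩ B)).choose a * (#(s \ B)).choose c := by
  rw [← card_powersetCard, ← card_powersetCard, ← card_product]
  refine card_nbij' (fun X ↦ (X ∩ B, X \ B)) (fun p ↦ p.1 ∪ p.2) ?mapsTo ?invMapsTo
    (fun X _ ↦ sup_inf_sdiff X B) ?rightInv
  case mapsTo =>
    intro X hX
    simp only [coe_filter, Set.mem_ofPred_eq, mem_powerset] at hX
    simp only [mem_coe, mem_product, mem_powersetCard]
    exact ⟨⟨inter_subset_inter_right hX.1, hX.2.1⟩, sdiff_subset_sdiff hX.1 Subset.rfl, hX.2.2⟩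
  all_goals
    rintro ⟨P, Q⟩ hPQ
    simp only [mem_coe, mem_product, mem_powersetCard, subset_inter_iff, subset_sdiff] at hPQ
    obtain ⟨⟨⟨hPs, hPB⟩, hP⟩, ⟨hQs, hQB⟩, hQ⟩ := hPQ
    have hinter : (P ∪ Q) ∩ B = P := by
      rw [union_inter_distrib_right, inter_eq_left.mpr hPB, disjoint_iff_inter_eq_empty.mp hQB,
        union_empty]
    have hsdiff : (P ∪ Q) \ B = Q := by
      rw [union_sdiff_distrib, sdiff_eq_empty_iff_subset.mpr hPB, sdiff_eq_self_of_disjoint hQB,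
        empty_union]
  case invMapsTo =>
    simp only [coe_filter, Set.mem_ofPred_eq, mem_powerset, hinter, hsdiff]
    exact ⟨union_subset hPs hQs, hP, hQ⟩
  case rightInv => exact Prod.ext hinter hsdiff

lemma card_inter_add_card_inter_le (X B C : Finset β) :
    #(X ∩ B) + #(X ∩ C) ≤ #X + #(B ∩ C) := by
  rw [← card_union_add_card_inter]
  gcongr
  · exact union_subset inter_subset_left inter_subset_left
  · exact inter_subset_right
  · exact inter_subset_right

end Counting

/-- The `m`-element subsets of the ground type `α` that meet `B` in at least `t` points: the
subsets that a block `B` accounts for in the block-number bound. -/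
def heavySubsets (m t : ℕ) (B : Finset α) : Finset (Finset α) :=
  {X ∈ powersetCard m univ | t ≤ #(X ∩ B)}

lemma mem_heavySubsets {m t : ℕ} {B X : Finset α} :
    X ∈ heavySubsets m t B ↔ #X = m ∧ t ≤ #(X ∩ B) := by
  simp only [heavySubsets, mem_filter, mem_powersetCard_univ]

lemma card_heavySubsets (m t : ℕ) (B : Finset α) :
    #(heavySubsets m t B) =
      ∑ j ∈ range (m + 1 - t), (#B).choose (m - j) * (Fintype.card α - #B).choose j := by
  have hmaps : ∀ X ∈ heavySubsets m t B, #(X \ B) ∈ range (m + 1 - t) := fun X hX ↦ by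
    have := card_inter_add_card_sdiff X B
    rw [mem_heavySubsets] at hX
    rw [mem_range]
    lia
  rw [card_eq_sum_card_fiberwise hmaps]
  refine sum_congr rfl fun j hj ↦ ?_
  have hfiber : {X ∈ heavySubsets m t B | #(X \ B) = j} =
      {X ∈ (univ : Finset α).powerset | #(X ∩ B) = m - j ∧ #(X \ B) = j} := by
    ext X
    have := card_inter_add_card_sdiff X B
    simp only [mem_filter, mem_heavySubsets, mem_powerset, subset_univ, true_and]
    rw [mem_range] at hj
    lia
  rw [hfiber, card_filter_powerset_card_inter_card_sdiff, univ_inter, card_univ_sdiff]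

lemma disjoint_heavySubsets {m t : ℕ} {B C : Finset α} (h : m + #(B ∩ C) < 2 * t) :
    Disjoint (heavySubsets m t B) (heavySubsets m t C) := by
  rw [disjoint_left]
  intro X hB hC
  rw [mem_heavySubsets] at hB hC
  have := card_inter_add_card_inter_le X B C
  lia

theorem block_number_bound_equality_iff_general (𝓑 : Finset (Finset α)) (m t : ℕ)
    (h𝓑 : (𝓑 : Set (Finset α)).Pairwise fun B C ↦ m + #(B ∩ C) < 2 * t) :
    (Fintype.card α).choose m =
      ∑ B ∈ 𝓑, ∑ j ∈ range (m + 1 - t),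
        (#B).choose (m - j) * (Fintype.card α - #B).choose j
    ↔ ∀ X : Finset α, #X = m → ∃ B ∈ 𝓑, t ≤ #(X ∩ B) := by
  have hdisj : (𝓑 : Set (Finset α)).PairwiseDisjoint (heavySubsets m t) :=
    h𝓑.mono' fun _ _ ↦ disjoint_heavySubsets
  have hsub : ∀ B ∈ 𝓑, heavySubsets m t B ⊆ powersetCard m univ := fun _ _ ↦ filter_subset _ _
  have hcount := card_eq_sum_card_iff_of_pairwiseDisjoint hdisj hsub
  simp only [card_powersetCard, card_univ, card_heavySubsets, mem_powersetCard_univ] at hcount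
  rw [hcount]
  refine forall₂_congr fun X hX ↦ ?_
  simp only [mem_heavySubsets, hX, true_and]

/-- **Proposition 0 (equality condition).** For a design `𝓑` with parameter `(v, k, d)`,
`b = |𝓑|` and `1 ≤ i ≤ (v - d + 1)/2`, equality
`C(v, d+2i-1) = b • ∑_{j=0}^{i-1} C(k, d+2i-1-j) C(v-k, j)` holds if and only if every
`(d+2i-1)`-element subset `X` of `Ω` admits a block `B ∈ 𝓑` with `|X ∩ B| ≥ d + i`. -/
theorem block_number_bound_equality_iff (𝓑 : Finset (Finset α)) (v k d : ℕ)
    (hD : IsDesign 𝓑 v k d) (i : ℕ) (hi1 : 1 ≤ i) (hi2 : 2 * i ≤ v - d + 1) :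
    v.choose (d + 2 * i - 1) =
      𝓑.card * ∑ j ∈ Finset.range i, (k.choose (d + 2 * i - 1 - j)) * ((v - k).choose j)
    ↔ ∀ X : Finset α, X.card = d + 2 * i - 1 → ∃ B ∈ 𝓑, d + i ≤ (X ∩ B).card := by
  obtain ⟨rfl, -, -, -, hk, hint, -⟩ := hD
  have hpair : (𝓑 : Set (Finset α)).Pairwise fun B C ↦ d + 2 * i - 1 + #(B ∩ C) < 2 * (d + i) :=
    fun B hB C hC hBC ↦ by have := hint B hB C hC hBC; lia
  have hrange : d + 2 * i - 1 + 1 - (d + i) = i := by lia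
  rw [← block_number_bound_equality_iff_general 𝓑 _ _ hpair, hrange,
    sum_const_nat (s := 𝓑) fun B hB ↦ by rw [hk B hB]]
end

section
/- Let 𝓓 = (Ω, 𝓑) be a β(i) design with parameter (v, k, d) satisfying v ≤ 2k and k−d ≥ i+1, and set c = k−d. Assume v does not achieve the lower bound (d+2i)·(k−d)/i, i.e. i·v > (d+2i)·(k−d). Then v ≥ k + γ₂, where γ₂ = (2(c−i)d + 2ic + 3i + 1)/(2(i+1)) + (1/(2i(i+1)))·√( −4i(c−i)(c−2i−1)d² − 4i(3i+1)(c−i)(c−2i−1)d − i²·(4(2i+1)c² − 4(2i+1)(3i+1)c + 16i³ + 15i² + 2i − 1) ). Moreover, equality v = k + γ₂ holds if and only if the number of blocks B ∈ 𝓑 with |B ∩ X| = d+i+1 is the same for every X ∈ S₂. -/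
open Finset

variable {α : Type*} [Fintype α] [DecidableEq α]

/-- The family `S₂` of all `(d + 2(i+1))`-element subsets `X` of `Ω` such that
`|X ∩ B| ≤ d + i + 1` for every block `B ∈ 𝓑`. -/
def S2 (𝓑 : Finset (Finset α)) (d i : ℕ) : Finset (Finset α) :=
  (Finset.univ : Finset (Finset α)).filter
    (fun X => X.card = d + 2 * (i + 1) ∧ ∀ B ∈ 𝓑, (X ∩ B).card ≤ d + i + 1)

/-!
For a set `X`, let `p(X)` be the number of blocks meeting `X` in `d + i + 1` points. The theorem is
the Cauchy–Schwarz inequality `(∑ p)² ≤ |S₂| ∑ p²` over `X ∈ S₂`, with its equality case.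

All three quantities are multiples of the number of pairs `(X, B)` with `|X ∩ B| = d + i` and
`|X \ B| = i`. For `|S₂|` this follows by deleting points one at a time, starting from the
`(d + 2i - 1)`-sets that meet every block in fewer than `d + i` points, of which there are none.
For `∑ p²` one needs the number of pairs of blocks that meet in `d` points: two blocks both meet a
`(d + 2s)`-set in at least `d + s` points only if they share exactly `d` points, and then the
number of such sets depends on `s` alone. Taking `s = i`, where the number of blocks meeting such
a set is the constant `(d + 2i) / i`, determines the number of pairs; taking `s = i + 1` then
gives `∑ p²`.

The resulting inequality is quadratic in `v`, and `k + γ₂` is the larger root of the quadratic.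
-/

section Generic

variable {ι R : Type*}

lemma sum_sum_sub_sq [CommRing R] (s : Finset ι) (f : ι → R) :
    ∑ x ∈ s, ∑ y ∈ s, (f x - f y) ^ 2 = 2 * (#s * ∑ x ∈ s, f x ^ 2 - (∑ x ∈ s, f x) ^ 2) := by
  simp only [sub_sq, sum_add_distrib, sum_sub_distrib, sum_const, nsmul_eq_mul, ← mul_sum,
    ← sum_mul]
  ring

lemma sq_sum_eq_card_mul_sum_sq_iff [CommRing R] [LinearOrder R] [IsStrictOrderedRing R]
    (s : Finset ι) (f : ι → R) :
    (∑ x ∈ s, f x) ^ 2 = #s * ∑ x ∈ s, f x ^ 2 ↔ ∀ x ∈ s, ∀ y ∈ s, f x = f y := by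
  have hsum := sum_sum_sub_sq s f
  calc (∑ x ∈ s, f x) ^ 2 = #s * ∑ x ∈ s, f x ^ 2
      ↔ ∑ x ∈ s, ∑ y ∈ s, (f x - f y) ^ 2 = 0 := by
        constructor <;> intro h <;> linarith
    _ ↔ ∀ x ∈ s, ∀ y ∈ s, f x = f y := by
        simp only [sum_eq_zero_iff_of_nonneg, sum_nonneg, sq_nonneg, implies_true, sq_eq_zero_iff,
          sub_eq_zero]

lemma exists_forall_mem_eq_iff {κ : Type*} [Nonempty κ] (s : Finset ι) (f : ι → κ) :
    (∃ a, ∀ x ∈ s, f x = a) ↔ ∀ x ∈ s, ∀ y ∈ s, f x = f y := by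
  refine ⟨fun ⟨a, ha⟩ x hx y hy => (ha x hx).trans (ha y hy).symm, fun h => ?_⟩
  rcases s.eq_empty_or_nonempty with rfl | ⟨y, hy⟩
  · simp
  · exact ⟨f y, fun x hx => h x hx y hy⟩

lemma cast_choose_succ_mul [Ring R] (n r : ℕ) :
    (n.choose (r + 1) : R) * (r + 1) = n.choose r * (n - r) := by
  rcases le_or_gt r n with h | h
  · exact_mod_cast congrArg (Nat.cast : ℕ → R) (n.choose_succ_right_eq r)
  · simp [Nat.choose_eq_zero_of_lt h, Nat.choose_eq_zero_of_lt (h.trans r.lt_succ_self)]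

end Generic

section FinsetCount

variable {β : Type*} [DecidableEq β]

lemma card_inter_add_card_inter (X B C : Finset β) :
    #(X ∩ B) + #(X ∩ C) = #(X ∩ (B ∪ C)) + #(X ∩ (B ∩ C)) := by
  rw [← card_union_add_card_inter, ← inter_union_distrib_left, ← inter_inter_distrib_left]

lemma inter_subset_and_subset_union_of_card_le {X B C : Finset β}
    (h : #X + #(B ∩ C) ≤ #(X ∩ B) + #(X ∩ C)) : B ∩ C ⊆ X ∧ X ⊆ B ∪ C := by
  rw [card_inter_add_card_inter] at h
  have hunion : #(X ∩ (B ∪ C)) ≤ #X := card_le_card inter_subset_left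
  have hinter : #(X ∩ (B ∩ C)) ≤ #(B ∩ C) := card_le_card inter_subset_right
  exact ⟨inter_eq_right.mp <| eq_of_subset_of_card_le inter_subset_right (by omega),
    inter_eq_left.mp <| eq_of_subset_of_card_le inter_subset_left (by omega)⟩

lemma card_filter_Icc_card_inter {D U V : Finset β} (hDU : Disjoint D U) (hDV : Disjoint D V)
    (hUV : Disjoint U V) (a b : ℕ) :
    #{X ∈ Icc D (D ∪ U ∪ V) | #(X ∩ U) = a ∧ #(X ∩ V) = b} = (#U).choose a * (#V).choose b := by
  rw [← card_powersetCard, ← card_powersetCard, ← card_product]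
  rw [disjoint_left] at hDU hDV hUV
  refine card_nbij' (fun X => (X ∩ U, X ∩ V)) (fun p => D ∪ p.1 ∪ p.2) ?_ ?_ ?_ ?_
  · intro X hX
    simp_all
  · rintro ⟨P, Q⟩ h
    simp only [coe_product, Set.mem_prod, mem_coe, mem_powersetCard] at h
    obtain ⟨⟨hPU, _⟩, hQV, _⟩ := h
    have hU : (D ∪ P ∪ Q) ∩ U = P := by grind
    have hV : (D ∪ P ∪ Q) ∩ V = Q := by grind
    grind
  · intro X hX
    grind
  · rintro ⟨P, Q⟩ h
    simp only [coe_product, Set.mem_prod, mem_coe, mem_powersetCard] at h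
    obtain ⟨⟨hPU, _⟩, hQV, _⟩ := h
    ext x <;> grind

lemma card_inter_eq_and_card_inter_eq_iff (X B C : Finset β) (s : ℕ) :
    #X = #(B ∩ C) + 2 * s ∧ #(X ∩ B) = #(B ∩ C) + s ∧ #(X ∩ C) = #(B ∩ C) + s ↔
      X ∈ Icc (B ∩ C) (B ∩ C ∪ B \ C ∪ C \ B) ∧ #(X ∩ (B \ C)) = s ∧ #(X ∩ (C \ B)) = s := by
  have hunion : B ∩ C ∪ B \ C ∪ C \ B = B ∪ C := by grind
  have hXB := card_inter_add_card_sdiff (X ∩ B) C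
  have hXC := card_inter_add_card_sdiff (X ∩ C) B
  rw [inter_assoc, inter_sdiff_assoc] at hXB hXC
  rw [inter_comm C B] at hXC
  rw [mem_Icc, hunion]
  constructor
  · rintro ⟨hX, hB, hC⟩
    have hXBC : B ∩ C ⊆ X ∧ X ⊆ B ∪ C := inter_subset_and_subset_union_of_card_le (by omega)
    rw [inter_eq_right.mpr hXBC.1] at hXB hXC
    exact ⟨hXBC, by omega, by omega⟩
  · rintro ⟨⟨hBCX, hXBC⟩, hB, hC⟩
    have hcard := card_inter_add_card_inter X B C
    rw [inter_eq_right.mpr hBCX] at hXB hXC hcard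
    rw [inter_eq_left.mpr hXBC] at hcard
    omega

end FinsetCount

section LightSets

lemma card_filter_card_inter_card_sdiff (B : Finset α) (t s : ℕ) :
    #{X : Finset α | #(X ∩ B) = t ∧ #(X \ B) = s} =
      (#B).choose t * (Fintype.card α - #B).choose s := by
  have h := card_filter_Icc_card_inter (disjoint_empty_left B) (disjoint_empty_left Bᶜ)
    disjoint_compl_right t s
  have hIcc : Icc ∅ (∅ ∪ B ∪ Bᶜ) = univ := by rw [empty_union, union_compl]; exact Icc_bot_top
  simpa only [hIcc, card_compl, ← sdiff_eq_inter_compl] using h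

/-- The light sets: those with `t + s` elements that meet every block in at most `t` points. The
size is written as `t + s` to avoid truncated subtraction. -/
def lightSets (𝓑 : Finset (Finset α)) (t s : ℕ) : Finset (Finset α) :=
  {X | #X = t + s ∧ ∀ B ∈ 𝓑, #(X ∩ B) ≤ t}

/-- The number of blocks meeting the set `X` in exactly `t` points. -/
def meetCount {β : Type*} [DecidableEq β] (𝓑 : Finset (Finset β)) (t : ℕ) (X : Finset β) : ℕ :=
  #{B ∈ 𝓑 | #(X ∩ B) = t}

/-- The number of flags: pairs `(X, B)` of a set and a block such that `X` has `t` points in `B`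
and `s` points outside `B`. -/
def flagCount (𝓑 : Finset (Finset α)) (t s : ℕ) : ℕ :=
  ∑ B ∈ 𝓑, #{X : Finset α | #(X ∩ B) = t ∧ #(X \ B) = s}

variable {𝓑 : Finset (Finset α)} {X Y B : Finset α} {d t s : ℕ}

lemma mem_lightSets : X ∈ lightSets 𝓑 t s ↔ #X = t + s ∧ ∀ B ∈ 𝓑, #(X ∩ B) ≤ t := by
  simp [lightSets]

lemma lightSets_subset_lightSets_succ : lightSets 𝓑 t (s + 1) ⊆ lightSets 𝓑 (t + 1) s := by
  intro X hX
  rw [mem_lightSets] at hX ⊢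
  exact ⟨by omega, fun B hB => (hX.2 B hB).trans t.le_succ⟩

lemma insert_mem_lightSets {x : α} (hY : Y ∈ lightSets 𝓑 t s) (hx : x ∉ Y) :
    insert x Y ∈ lightSets 𝓑 (t + 1) s := by
  rw [mem_lightSets] at hY ⊢
  refine ⟨by rw [card_insert_of_notMem hx, hY.1]; omega, fun B hB => ?_⟩
  calc #(insert x Y ∩ B) ≤ #(insert x (Y ∩ B)) := card_le_card (by grind)
    _ ≤ #(Y ∩ B) + 1 := card_insert_le _ _
    _ ≤ t + 1 := Nat.succ_le_succ (hY.2 B hB)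

lemma erase_notMem_lightSets_iff {x : α} (hX : X ∈ lightSets 𝓑 (t + 1) s) (hx : x ∈ X) :
    X.erase x ∉ lightSets 𝓑 t s ↔ ∃ B ∈ 𝓑, #(X ∩ B) = t + 1 ∧ x ∉ B := by
  rw [mem_lightSets] at hX
  have hcard : #(X.erase x) = t + s := by rw [card_erase_of_mem hx, hX.1]; omega
  simp only [mem_lightSets, hcard, true_and, not_forall, exists_prop, not_le, erase_inter]
  refine exists_congr fun B => and_congr_right fun hB => ?_
  have hXB := hX.2 B hB
  by_cases hxB : x ∈ B
  · have := card_erase_add_one (mem_inter.mpr ⟨hx, hxB⟩)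
    simp only [hxB, not_true_eq_false, and_false, iff_false]
    omega
  · rw [erase_eq_of_notMem (fun h => hxB (mem_inter.mp h).2)]
    simp only [hxB, not_false_eq_true, and_true]
    omega

lemma sum_card_filter_erase_mem_lightSets (𝓑 : Finset (Finset α)) (t s : ℕ) :
    ∑ X ∈ lightSets 𝓑 (t + 1) s, #{x ∈ X | X.erase x ∈ lightSets 𝓑 t s} =
      ∑ Y ∈ lightSets 𝓑 t s, #Yᶜ := by
  rw [← card_sigma, ← card_sigma]
  refine card_nbij' (fun p => ⟨p.1.erase p.2, p.2⟩) (fun p => ⟨insert p.2 p.1, p.2⟩) ?_ ?_ ?_ ?_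
  · rintro ⟨X, x⟩ h
    simp_all
  · rintro ⟨Y, x⟩ h
    simp_all [insert_mem_lightSets]
  · rintro ⟨X, x⟩ h
    simp_all
  · rintro ⟨Y, x⟩ h
    simp_all

variable (hd : (𝓑 : Set (Finset α)).Pairwise fun B C => #(B ∩ C) ≤ d)
include hd

lemma mem_lightSets_of_card_inter_eq (hst : s + d ≤ t) (hB : B ∈ 𝓑) (hX : #(X ∩ B) = t)
    (hXB : #(X \ B) = s) : X ∈ lightSets 𝓑 t s := by
  have hcard : #X = t + s := by rw [← card_inter_add_card_sdiff X B, hX, hXB]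
  refine mem_lightSets.mpr ⟨hcard, fun C hC => ?_⟩
  rcases eq_or_ne B C with rfl | hBC
  · exact hX.le
  · have hle := card_inter_add_card_inter_le X B C
    have := hd hB hC hBC
    omega

lemma sum_meetCount_lightSets (hst : s + d ≤ t) :
    ∑ X ∈ lightSets 𝓑 t s, meetCount 𝓑 t X = flagCount 𝓑 t s := by
  refine (sum_card_bipartiteAbove_eq_sum_card_bipartiteBelow fun X B => #(X ∩ B) = t).trans ?_
  refine sum_congr rfl fun B hB => congrArg card ?_
  ext X
  have hcard := card_inter_add_card_sdiff X B
  simp only [bipartiteBelow, mem_filter, mem_univ, true_and]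
  constructor
  · rintro ⟨hX, hXB⟩
    have := (mem_lightSets.mp hX).1
    omega
  · rintro ⟨hXB, hXB'⟩
    exact ⟨mem_lightSets_of_card_inter_eq hd hst hB hXB hXB', hXB⟩

lemma card_filter_erase_mem_lightSets_add (hst : s + d ≤ t + 1) (hX : X ∈ lightSets 𝓑 (t + 1) s) :
    #{x ∈ X | X.erase x ∈ lightSets 𝓑 t s} + s * meetCount 𝓑 (t + 1) X = t + 1 + s := by
  have hcard := (mem_lightSets.mp hX).1
  have hbad : ({x ∈ X | X.erase x ∉ lightSets 𝓑 t s} : Finset α) =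
      {B ∈ 𝓑 | #(X ∩ B) = t + 1}.biUnion (X \ ·) := by
    ext x
    simp only [mem_filter, mem_biUnion, mem_sdiff]
    constructor
    · rintro ⟨hx, h⟩
      obtain ⟨B, hB, hXB, hxB⟩ := (erase_notMem_lightSets_iff hX hx).mp h
      exact ⟨B, ⟨hB, hXB⟩, hx, hxB⟩
    · rintro ⟨B, ⟨hB, hXB⟩, hx, hxB⟩
      exact ⟨hx, (erase_notMem_lightSets_iff hX hx).mpr ⟨B, hB, hXB, hxB⟩⟩
  rw [← card_filter_add_card_filter_not (s := X) (fun x => X.erase x ∈ lightSets 𝓑 t s)] at hcard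
  rw [← hcard, hbad, card_biUnion, sum_const_nat (m := s), mul_comm, meetCount]
  · intro B hB
    have := card_inter_add_card_sdiff X B
    have := (mem_lightSets.mp hX).1
    have := (mem_filter.mp hB).2
    omega
  · intro B hB C hC hBC
    rw [mem_coe, mem_filter] at hB hC
    have := hd hB.1 hC.1 hBC
    have := (mem_lightSets.mp hX).1
    have hunion : X ⊆ B ∪ C := (inter_subset_and_subset_union_of_card_le (by omega)).2
    change Disjoint (X \ B) (X \ C)
    rw [disjoint_left]
    grind

lemma card_lightSets_succ_left_mul (hst : s + d ≤ t + 1) :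
    (t + 1 + s) * #(lightSets 𝓑 (t + 1) s) + (t + s) * #(lightSets 𝓑 t s) =
      Fintype.card α * #(lightSets 𝓑 t s) + s * flagCount 𝓑 (t + 1) s := by
  have hgood := sum_const_nat fun X => card_filter_erase_mem_lightSets_add hd (X := X) hst
  have hcompl : ∑ Y ∈ lightSets 𝓑 t s, (#Yᶜ + #Y) = #(lightSets 𝓑 t s) * Fintype.card α :=
    sum_const_nat fun Y _ => card_compl_add_card Y
  have hsize : ∑ Y ∈ lightSets 𝓑 t s, #Y = #(lightSets 𝓑 t s) * (t + s) :=
    sum_const_nat fun Y hY => (mem_lightSets.mp hY).1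
  rw [sum_add_distrib, ← mul_sum, sum_meetCount_lightSets hd hst,
    sum_card_filter_erase_mem_lightSets] at hgood
  rw [sum_add_distrib, hsize] at hcompl
  linarith

lemma card_lightSets_succ_left (hst : s + d ≤ t) :
    #(lightSets 𝓑 (t + 1) s) = #(lightSets 𝓑 t (s + 1)) + flagCount 𝓑 (t + 1) s := by
  have hsub : lightSets 𝓑 t (s + 1) ⊆ lightSets 𝓑 (t + 1) s := lightSets_subset_lightSets_succ
  have hzero : ∀ X ∈ lightSets 𝓑 t (s + 1), meetCount 𝓑 (t + 1) X = 0 := by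
    intro X hX
    rw [meetCount, card_eq_zero, filter_eq_empty_iff]
    intro B hB
    have := (mem_lightSets.mp hX).2 B hB
    omega
  have hone : ∀ X ∈ lightSets 𝓑 (t + 1) s \ lightSets 𝓑 t (s + 1), meetCount 𝓑 (t + 1) X = 1 := by
    intro X hX
    simp only [mem_sdiff, mem_lightSets, not_and, not_forall, not_le] at hX
    obtain ⟨⟨hcard, hle⟩, h⟩ := hX
    obtain ⟨B, hB, hXB⟩ := h (by omega)
    refine card_eq_one.mpr ⟨B, ?_⟩
    ext C
    rw [mem_filter, mem_singleton]
    refine ⟨fun ⟨hC, _⟩ => ?_, ?_⟩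
    · by_contra hCB
      have := card_inter_add_card_inter_le X C B
      have := hd hC hB hCB
      omega
    · rintro rfl
      exact ⟨hB, (hle C hB).antisymm hXB⟩
  rw [← sum_meetCount_lightSets hd (hst.trans t.le_succ), ← sum_sdiff hsub, sum_eq_zero hzero,
    sum_const_nat hone, mul_one, add_zero, ← card_sdiff_add_card_eq_card hsub, add_comm]

end LightSets

section Pairs

/-- The ordered pairs of distinct blocks that meet in exactly `d` points. -/
def meetingPairs {β : Type*} [DecidableEq β] (𝓑 : Finset (Finset β)) (d : ℕ) :
    Finset (Finset β × Finset β) :=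
  {p ∈ 𝓑.offDiag | #(p.1 ∩ p.2) = d}

lemma card_filter_lightSets_card_inter_card_inter {𝓑 : Finset (Finset α)} {B C : Finset α} {d c : ℕ}
    (hd : (𝓑 : Set (Finset α)).Pairwise fun B C => #(B ∩ C) ≤ d)
    (hc : ∀ B ∈ 𝓑, #B = d + c) (hB : B ∈ 𝓑) (hC : C ∈ 𝓑) (hBC : B ≠ C) (s : ℕ) :
    #{X ∈ lightSets 𝓑 (d + s) s | #(X ∩ B) = d + s ∧ #(X ∩ C) = d + s} =
      if #(B ∩ C) = d then c.choose s ^ 2 else 0 := by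
  split_ifs with hBCd
  · have hcB : #(B \ C) = c := by have := card_inter_add_card_sdiff B C; have := hc B hB; omega
    have hcC : #(C \ B) = c := by
      have := card_inter_add_card_sdiff C B
      have := hc C hC
      rw [inter_comm] at hBCd
      omega
    have hcount := card_filter_Icc_card_inter (D := B ∩ C) (U := B \ C) (V := C \ B)
      (by rw [disjoint_left]; grind) (by rw [disjoint_left]; grind) disjoint_sdiff_sdiff s s
    rw [hcB, hcC, ← sq] at hcount
    rw [← hcount]
    congr 1
    ext X
    have hiff := card_inter_eq_and_card_inter_eq_iff X B C s
    rw [hBCd] at hiff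
    simp only [mem_filter, ← hiff]
    refine ⟨fun ⟨hX, hXB, hXC⟩ => ⟨by rw [(mem_lightSets.mp hX).1]; omega, hXB, hXC⟩,
      fun ⟨_, hXB, hXC⟩ => ⟨?_, hXB, hXC⟩⟩
    have := card_inter_add_card_sdiff X B
    exact mem_lightSets_of_card_inter_eq hd (add_comm s d).le hB hXB (by omega)
  · rw [card_eq_zero, filter_eq_empty_iff]
    rintro X hX ⟨hXB, hXC⟩
    have := card_inter_add_card_inter_le X B C
    have := (mem_lightSets.mp hX).1
    have := hd hB hC hBC
    omega

lemma meetCount_sq {β : Type*} [DecidableEq β] (𝓑 : Finset (Finset β)) (t : ℕ) (X : Finset β) :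
    meetCount 𝓑 t X ^ 2 =
      meetCount 𝓑 t X + #{p ∈ 𝓑.offDiag | #(X ∩ p.1) = t ∧ #(X ∩ p.2) = t} := by
  have hoff : {p ∈ 𝓑.offDiag | #(X ∩ p.1) = t ∧ #(X ∩ p.2) = t} =
      ({B ∈ 𝓑 | #(X ∩ B) = t} : Finset (Finset β)).offDiag := by
    ext p
    simp only [mem_filter, mem_offDiag]
    tauto
  rw [hoff, offDiag_card, meetCount, sq, Nat.add_sub_cancel' (Nat.le_mul_self _)]

lemma sum_meetCount_sq_lightSets {𝓑 : Finset (Finset α)} {d c : ℕ}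
    (hd : (𝓑 : Set (Finset α)).Pairwise fun B C => #(B ∩ C) ≤ d)
    (hc : ∀ B ∈ 𝓑, #B = d + c) (s : ℕ) :
    ∑ X ∈ lightSets 𝓑 (d + s) s, meetCount 𝓑 (d + s) X ^ 2 =
      flagCount 𝓑 (d + s) s + #(meetingPairs 𝓑 d) * c.choose s ^ 2 := by
  simp only [meetCount_sq, sum_add_distrib]
  rw [sum_meetCount_lightSets hd (add_comm s d).le]
  congr 1
  calc ∑ X ∈ lightSets 𝓑 (d + s) s, #{p ∈ 𝓑.offDiag | #(X ∩ p.1) = d + s ∧ #(X ∩ p.2) = d + s}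
      = ∑ p ∈ 𝓑.offDiag,
          #{X ∈ lightSets 𝓑 (d + s) s | #(X ∩ p.1) = d + s ∧ #(X ∩ p.2) = d + s} := by
        simp only [card_filter]
        exact sum_comm
    _ = ∑ p ∈ 𝓑.offDiag, if #(p.1 ∩ p.2) = d then c.choose s ^ 2 else 0 :=
        sum_congr rfl fun p hp =>
          have ⟨hB, hC, hBC⟩ := mem_offDiag.mp hp
          card_filter_lightSets_card_inter_card_inter hd hc hB hC hBC s
    _ = #(meetingPairs 𝓑 d) * c.choose s ^ 2 := by
        rw [← sum_filter, sum_const, smul_eq_mul, meetingPairs]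

end Pairs

section FlagCount

variable (R : Type*) [CommRing R] {𝓑 : Finset (Finset α)} {k : ℕ}

lemma flagCount_eq (hk : ∀ B ∈ 𝓑, #B = k) (t s : ℕ) :
    flagCount 𝓑 t s = #𝓑 * (k.choose t * (Fintype.card α - k).choose s) :=
  sum_const_nat fun B hB => by rw [card_filter_card_inter_card_sdiff, hk B hB]

lemma add_one_mul_flagCount_succ_left (hk : ∀ B ∈ 𝓑, #B = k) (t s : ℕ) :
    ((t : R) + 1) * flagCount 𝓑 (t + 1) s = (k - t) * flagCount 𝓑 t s := by
  have h := cast_choose_succ_mul (R := R) k t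
  rw [flagCount_eq hk, flagCount_eq hk]
  push_cast
  linear_combination (#𝓑 * (Fintype.card α - k).choose s : R) * h

lemma add_one_mul_flagCount_succ_right {w : ℕ} (hk : ∀ B ∈ 𝓑, #B = k)
    (hw : Fintype.card α = k + w) (t s : ℕ) :
    ((s : R) + 1) * flagCount 𝓑 t (s + 1) = (w - s) * flagCount 𝓑 t s := by
  have h := cast_choose_succ_mul (R := R) w s
  rw [flagCount_eq hk, flagCount_eq hk, hw, Nat.add_sub_cancel_left]
  push_cast
  linear_combination (#𝓑 * k.choose t : R) * h

end FlagCount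

section GammaTwo

/-- `i` times the excess of `v` over the bound `(d + 2i)c / i`. Up to a positive factor it counts
the light sets of `IsBetaDesign.mul_card_lightSets_succ_right`, which is why that bound holds. -/
def betaSlack (c d i v : ℝ) : ℝ :=
  i * v - (d + 2 * i) * c

/-- The radicand in the definition of `γ₂`. -/
def gammaDisc (c d i : ℝ) : ℝ :=
  -4 * i * (c - i) * (c - 2 * i - 1) * d ^ 2 - 4 * i * (3 * i + 1) * (c - i) * (c - 2 * i - 1) * d -
    i ^ 2 * (4 * (2 * i + 1) * c ^ 2 - 4 * (2 * i + 1) * (3 * i + 1) * c + 16 * i ^ 3 +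
      15 * i ^ 2 + 2 * i - 1)

/-- The constant `γ₂` of the lower bound `v ≥ k + γ₂`. -/
noncomputable def gammaTwo (c d i : ℝ) : ℝ :=
  (2 * (c - i) * d + 2 * i * c + 3 * i + 1) / (2 * (i + 1)) +
    (1 / (2 * i * (i + 1))) * √(gammaDisc c d i)

/-- The affine function of `v` that takes the value `√gammaDisc` at `v = k + γ₂`, where
`k = d + c`, written in terms of the slack of `v`. -/
def gammaShift (c d i v : ℝ) : ℝ :=
  2 * (i + 1) * betaSlack c d i v + 2 * (c - i) * (d + i) - i * (i + 1)

variable {c d i v : ℝ}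

lemma gammaDisc_eq (c d i : ℝ) :
    gammaDisc c d i =
      i ^ 2 * (i + 1) ^ 2 + 4 * i * ((c - i) * (2 * i + 1 - c)) * ((d + i) * (d + 2 * i + 1)) := by
  rw [gammaDisc]
  ring

lemma gammaDisc_nonneg (hd : 0 ≤ d) (hi : 0 ≤ i) (hic : i ≤ c) (hci : c ≤ 2 * i + 1) :
    0 ≤ gammaDisc c d i := by
  have : 0 ≤ (c - i) * (2 * i + 1 - c) :=
    mul_nonneg (sub_nonneg.mpr hic) (sub_nonneg.mpr hci)
  rw [gammaDisc_eq]
  positivity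

lemma mul_sub_gammaTwo_eq_gammaShift_sub_sqrt (hi : 0 < i) :
    2 * i * (i + 1) * (v - (d + c + gammaTwo c d i)) =
      gammaShift c d i v - √(gammaDisc c d i) := by
  rw [gammaTwo, gammaShift, betaSlack]
  field_simp
  ring

lemma gammaShift_nonneg (hd : 0 ≤ d) (hi : 1 ≤ i) (hic : i ≤ c) (hslack : 0 < betaSlack c d i v)
    (h : gammaDisc c d i ≤ gammaShift c d i v ^ 2) : 0 ≤ gammaShift c d i v := by
  have hlt : 2 * (c - i) * (d + i) - i * (i + 1) < gammaShift c d i v := by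
    rw [gammaShift]
    nlinarith
  rcases le_total (2 * i) c with hc | hc
  · nlinarith [mul_nonneg hd (sub_nonneg.mpr hic)]
  · have hle : (c - i) * (d + i) ≤ i * (2 * i + 1 - c) * (d + 2 * i + 1) + i * (i + 1) :=
      calc (c - i) * (d + i) ≤ i * (d + 2 * i + 1) :=
            mul_le_mul (by linarith) (by linarith) (by linarith) (by linarith)
        _ ≤ i * (2 * i + 1 - c) * (d + 2 * i + 1) :=
            mul_le_mul_of_nonneg_right (le_mul_of_one_le_right (by linarith) (by linarith))
              (by linarith)
        _ ≤ i * (2 * i + 1 - c) * (d + 2 * i + 1) + i * (i + 1) :=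
            le_add_of_nonneg_right (by positivity)
    have hsq : (2 * (c - i) * (d + i) - i * (i + 1)) ^ 2 ≤ gammaDisc c d i := by
      rw [gammaDisc_eq]
      linear_combination 4 * ((c - i) * (d + i)) * hle
    by_contra! hneg
    nlinarith

lemma add_gammaTwo_le_and_eq_iff (hd : 0 ≤ d) (hi : 1 ≤ i) (hic : i ≤ c) (hci : c ≤ 2 * i + 1)
    (hslack : 0 < betaSlack c d i v) (h : gammaDisc c d i ≤ gammaShift c d i v ^ 2) :
    d + c + gammaTwo c d i ≤ v ∧
      (v = d + c + gammaTwo c d i ↔ gammaDisc c d i = gammaShift c d i v ^ 2) := by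
  have hshift := gammaShift_nonneg hd hi hic hslack h
  have hdisc := gammaDisc_nonneg hd (by linarith) hic hci
  have hmul := mul_sub_gammaTwo_eq_gammaShift_sub_sqrt
    (c := c) (d := d) (v := v) (by linarith : 0 < i)
  have hpos : 0 < 2 * i * (i + 1) := by positivity
  constructor
  · have hsqrt : √(gammaDisc c d i) ≤ gammaShift c d i v := Real.sqrt_le_iff.mpr ⟨hshift, h⟩
    exact sub_nonneg.mp (nonneg_of_mul_nonneg_right (hmul ▸ sub_nonneg.mpr hsqrt) hpos)
  · rw [← Real.sqrt_eq_iff_eq_sq hdisc hshift, eq_comm (a := √_), ← sub_eq_zero (b := √_), ← hmul,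
      mul_eq_zero_iff_left hpos.ne', sub_eq_zero]

lemma variance_identity {A U G n P : ℝ} (hdi : d + i + 1 ≠ 0)
    (hU : (d + 2 * i) * (d + 2 * i + 1) * U = betaSlack c d i v * A)
    (hG : i * (i + 1) * (d + i + 1) * G =
      (betaSlack c d i v + (c - i) * (d + i)) * (c - i) * A)
    (hn : (d + 2 * i + 2) * n = (v - (d + 2 * i + 1)) * U + (i + 1) * G)
    (hP : i * (i + 1) ^ 2 * P = (c - i) ^ 2 * (d + i) * A) :
    4 * i ^ 2 * (i + 1) ^ 3 * (d + i + 1) * (d + 2 * i + 2) * (d + 2 * i) * (d + 2 * i + 1) *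
        (n * (G + P) - G ^ 2) =
      A ^ 2 * (c - i) * betaSlack c d i v * (gammaShift c d i v ^ 2 - gammaDisc c d i) := by
  have hz : betaSlack c d i v = i * v - (d + 2 * i) * c := rfl
  rw [gammaShift, gammaDisc_eq]
  generalize betaSlack c d i v = z at *
  have hGP : i * (i + 1) ^ 2 * (d + i + 1) * (G + P) =
      ((i + 1) * (z + (c - i) * (d + i)) + (c - i) * (d + i) * (d + i + 1)) * (c - i) * A := by
    linear_combination (i + 1) * hG + (d + i + 1) * hP
  have hn' : i * (d + i + 1) * (d + 2 * i + 2) * (d + 2 * i) * (d + 2 * i + 1) * n =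
      ((z + (c - i) * (d + 2 * i) - i) * (d + i + 1) * z +
        (z + (c - i) * (d + i)) * (c - i) * (d + 2 * i) * (d + 2 * i + 1)) * A := by
    linear_combination i * (d + i + 1) * (d + 2 * i) * (d + 2 * i + 1) * hn +
      (d + 2 * i) * (d + 2 * i + 1) * hG +
      (z + (c - i) * (d + 2 * i) - i) * (d + i + 1) * hU -
      (d + i + 1) * (d + 2 * i) * (d + 2 * i + 1) * U * hz
  apply mul_left_cancel₀ hdi
  calc (d + i + 1) * (4 * i ^ 2 * (i + 1) ^ 3 * (d + i + 1) * (d + 2 * i + 2) * (d + 2 * i) *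
        (d + 2 * i + 1) * (n * (G + P) - G ^ 2))
      = 4 * (i + 1) * (i * (d + i + 1) * (d + 2 * i + 2) * (d + 2 * i) * (d + 2 * i + 1) * n) *
          (i * (i + 1) ^ 2 * (d + i + 1) * (G + P)) -
        4 * (i + 1) * (d + 2 * i + 2) * (d + 2 * i) * (d + 2 * i + 1) *
          (i * (i + 1) * (d + i + 1) * G) ^ 2 := by ring
    _ = (d + i + 1) * (A ^ 2 * (c - i) * z *
          ((2 * (i + 1) * z + 2 * (c - i) * (d + i) - i * (i + 1)) ^ 2 -
            (i ^ 2 * (i + 1) ^ 2 +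
              4 * i * ((c - i) * (2 * i + 1 - c)) * ((d + i) * (d + 2 * i + 1))))) := by
        rw [hn', hGP, hG]
        ring

end GammaTwo

section BetaDesign

variable {𝓑 : Finset (Finset α)} {X : Finset α} {v k c d i : ℕ}

lemma IsDesign.card_of_mem (h : IsDesign 𝓑 v k d) : ∀ B ∈ 𝓑, #B = k :=
  h.2.2.2.2.1

lemma IsDesign.pairwise_card_inter_le (h : IsDesign 𝓑 v k d) :
    (𝓑 : Set (Finset α)).Pairwise fun B C => #(B ∩ C) ≤ d :=
  fun B hB C hC => h.2.2.2.2.2.1 B hB C hC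

lemma S2_eq_lightSets (𝓑 : Finset (Finset α)) (d i : ℕ) :
    S2 𝓑 d i = lightSets 𝓑 (d + i + 1) (i + 1) := by
  rw [S2, lightSets, show d + 2 * (i + 1) = d + i + 1 + (i + 1) by ring]

namespace IsBetaDesign

lemma lightSets_eq_empty (h : IsBetaDesign 𝓑 v k d (i + 1)) : lightSets 𝓑 (d + i) (i + 1) = ∅ := by
  refine eq_empty_of_forall_notMem fun X hX => ?_
  rw [mem_lightSets] at hX
  obtain ⟨B, ⟨hB, hXB⟩, -⟩ := h.2.2.2 X (by omega)
  have := hX.2 B hB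
  omega

lemma mul_meetCount (h : IsBetaDesign 𝓑 v k d i) (hX : X ∈ lightSets 𝓑 (d + i) i) :
    i * meetCount 𝓑 (d + i) X = d + 2 * i := by
  obtain ⟨j, rfl⟩ := Nat.exists_eq_add_of_le' h.2.1
  have hcount := card_filter_erase_mem_lightSets_add h.1.pairwise_card_inter_le
    (t := d + j) (by omega) hX
  simp only [h.lightSets_eq_empty, notMem_empty, filter_false, card_empty, zero_add] at hcount
  rw [← add_assoc, hcount]
  ring

lemma mul_card_lightSets (h : IsBetaDesign 𝓑 v k d i) :
    (d + 2 * i) * #(lightSets 𝓑 (d + i) i) = i * flagCount 𝓑 (d + i) i := by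
  obtain ⟨j, rfl⟩ := Nat.exists_eq_add_of_le' h.2.1
  have hcount := card_lightSets_succ_left_mul h.1.pairwise_card_inter_le
    (t := d + j) (s := j + 1) (by omega)
  rw [h.lightSets_eq_empty, card_empty, mul_zero, mul_zero, add_zero, zero_add] at hcount
  rw [← add_assoc, ← hcount]
  ring

lemma mul_card_meetingPairs_mul (h : IsBetaDesign 𝓑 v (d + c) d i) :
    i * (#(meetingPairs 𝓑 d) * c.choose i ^ 2) = (d + i) * flagCount 𝓑 (d + i) i := by
  have hd := h.1.pairwise_card_inter_le
  have hsum := sum_meetCount_lightSets hd (add_comm i d).le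
  have hsq := sum_meetCount_sq_lightSets hd h.1.card_of_mem i
  have hconst : i * ∑ X ∈ lightSets 𝓑 (d + i) i, meetCount 𝓑 (d + i) X ^ 2 =
      (d + 2 * i) * ∑ X ∈ lightSets 𝓑 (d + i) i, meetCount 𝓑 (d + i) X := by
    rw [mul_sum, mul_sum]
    exact sum_congr rfl fun X hX => by rw [sq, ← mul_assoc, h.mul_meetCount hX]
  rw [hsq, hsum] at hconst
  linarith

lemma mul_card_meetingPairs_mul_succ (h : IsBetaDesign 𝓑 v (d + c) d i) :
    (i * (i + 1) ^ 2 : ℝ) * (#(meetingPairs 𝓑 d) * c.choose (i + 1) ^ 2) =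
      (c - i) ^ 2 * (d + i) * flagCount 𝓑 (d + i) i := by
  have hpairs : (i : ℝ) * (#(meetingPairs 𝓑 d) * c.choose i ^ 2) =
      (d + i) * flagCount 𝓑 (d + i) i := mod_cast h.mul_card_meetingPairs_mul
  have hchoose := cast_choose_succ_mul (R := ℝ) c i
  calc (i : ℝ) * (i + 1) ^ 2 * (#(meetingPairs 𝓑 d) * c.choose (i + 1) ^ 2)
      = (i : ℝ) * #(meetingPairs 𝓑 d) * (c.choose (i + 1) * (i + 1) : ℝ) ^ 2 := by ring
    _ = (c - i : ℝ) ^ 2 * (i * (#(meetingPairs 𝓑 d) * c.choose i ^ 2)) := by rw [hchoose]; ring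
    _ = (c - i : ℝ) ^ 2 * (d + i) * flagCount 𝓑 (d + i) i := by rw [hpairs]; ring

lemma mul_flagCount_succ (h : IsBetaDesign 𝓑 v (d + c) d i) :
    (d + i + 1 : ℝ) * flagCount 𝓑 (d + i + 1) i = (c - i) * flagCount 𝓑 (d + i) i := by
  have hleft := add_one_mul_flagCount_succ_left ℝ h.1.card_of_mem (d + i) i
  push_cast at hleft
  linear_combination hleft

lemma mul_flagCount_succ_succ (h : IsBetaDesign 𝓑 v (d + c) d i) :
    (i * (i + 1) * (d + i + 1) : ℝ) * flagCount 𝓑 (d + i + 1) (i + 1) =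
      (betaSlack c d i v + (c - i) * (d + i)) * (c - i) * flagCount 𝓑 (d + i) i := by
  obtain ⟨w, rfl⟩ := Nat.exists_eq_add_of_le h.1.2.2.2.1.le
  have hright := add_one_mul_flagCount_succ_right ℝ h.1.card_of_mem h.1.1 (d + i + 1) i
  have hleft := h.mul_flagCount_succ
  rw [betaSlack]
  push_cast
  linear_combination (i * (d + i + 1) : ℝ) * hright + (i * (w - i) : ℝ) * hleft

lemma mul_card_lightSets_succ_right (h : IsBetaDesign 𝓑 v (d + c) d i) :
    ((d + 2 * i) * (d + 2 * i + 1) : ℝ) * #(lightSets 𝓑 (d + i) (i + 1)) =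
      betaSlack c d i v * flagCount 𝓑 (d + i) i := by
  have hd := h.1.pairwise_card_inter_le
  have hn : (d + 2 * i : ℝ) * #(lightSets 𝓑 (d + i) i) = i * flagCount 𝓑 (d + i) i :=
    mod_cast h.mul_card_lightSets
  have hrec := congrArg (Nat.cast : ℕ → ℝ)
    (card_lightSets_succ_left_mul hd (t := d + i) (s := i) (by omega))
  have hsplit := congrArg (Nat.cast : ℕ → ℝ)
    (card_lightSets_succ_left hd (t := d + i) (s := i) (by omega))
  have hleft := h.mul_flagCount_succ
  rw [h.1.1] at hrec
  push_cast at hrec hsplit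
  rw [betaSlack]
  linear_combination (d + 2 * i : ℝ) * (hrec - (d + 2 * i + 1) * hsplit - hleft) +
    (v - d - 2 * i : ℝ) * hn

lemma mul_card_lightSets_succ_succ (h : IsBetaDesign 𝓑 v (d + c) d i) :
    (d + 2 * i + 2 : ℝ) * #(lightSets 𝓑 (d + i + 1) (i + 1)) =
      (v - (d + 2 * i + 1)) * #(lightSets 𝓑 (d + i) (i + 1)) +
        (i + 1) * flagCount 𝓑 (d + i + 1) (i + 1) := by
  have hrec := congrArg (Nat.cast : ℕ → ℝ) (card_lightSets_succ_left_mul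
    h.1.pairwise_card_inter_le (t := d + i) (s := i + 1) (by omega))
  rw [h.1.1] at hrec
  push_cast at hrec
  linear_combination hrec

lemma flagCount_pos (h : IsBetaDesign 𝓑 v (d + c) d i) (hic : i ≤ c) (hiv : d + c + i ≤ v) :
    0 < flagCount 𝓑 (d + i) i := by
  rw [flagCount_eq h.1.card_of_mem, h.1.1]
  have hblocks := h.1.2.1
  exact Nat.mul_pos (by omega)
    (Nat.mul_pos (Nat.choose_pos (by omega)) (Nat.choose_pos (by omega)))

lemma variance_meetCount (h : IsBetaDesign 𝓑 v (d + c) d i) :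
    (4 * i ^ 2 * (i + 1) ^ 3 * (d + i + 1) * (d + 2 * i + 2) * (d + 2 * i) * (d + 2 * i + 1) : ℝ) *
      (#(lightSets 𝓑 (d + i + 1) (i + 1)) *
          ∑ X ∈ lightSets 𝓑 (d + i + 1) (i + 1), (meetCount 𝓑 (d + i + 1) X : ℝ) ^ 2 -
        (∑ X ∈ lightSets 𝓑 (d + i + 1) (i + 1), (meetCount 𝓑 (d + i + 1) X : ℝ)) ^ 2) =
    flagCount 𝓑 (d + i) i ^ 2 * (c - i) * betaSlack c d i v *
      (gammaShift c d i v ^ 2 - gammaDisc c d i) := by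
  have hd := h.1.pairwise_card_inter_le
  have hsum : ∑ X ∈ lightSets 𝓑 (d + i + 1) (i + 1), (meetCount 𝓑 (d + i + 1) X : ℝ) =
      flagCount 𝓑 (d + i + 1) (i + 1) := by
    exact_mod_cast sum_meetCount_lightSets hd (t := d + i + 1) (s := i + 1) (by omega)
  have hsq : ∑ X ∈ lightSets 𝓑 (d + i + 1) (i + 1), (meetCount 𝓑 (d + i + 1) X : ℝ) ^ 2 =
      flagCount 𝓑 (d + i + 1) (i + 1) + #(meetingPairs 𝓑 d) * c.choose (i + 1) ^ 2 := by
    exact_mod_cast sum_meetCount_sq_lightSets hd h.1.card_of_mem (i + 1)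
  rw [hsum, hsq]
  exact variance_identity (by positivity) h.mul_card_lightSets_succ_right
    h.mul_flagCount_succ_succ h.mul_card_lightSets_succ_succ h.mul_card_meetingPairs_mul_succ

lemma gammaDisc_le_and_eq_iff (h : IsBetaDesign 𝓑 v (d + c) d i) (hic : i < c)
    (hlb : (d + 2 * i) * c < i * v) :
    gammaDisc c d i ≤ gammaShift c d i v ^ 2 ∧
      (gammaDisc c d i = gammaShift c d i v ^ 2 ↔
        ∃ m, ∀ X ∈ lightSets 𝓑 (d + i + 1) (i + 1), meetCount 𝓑 (d + i + 1) X = m) := by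
  set L := lightSets 𝓑 (d + i + 1) (i + 1)
  have hi : (0 : ℝ) < i := Nat.cast_pos.mpr h.2.1
  have hslack : 0 < betaSlack c d i v := sub_pos.mpr (mod_cast hlb)
  have hci : (0 : ℝ) < c - i := sub_pos.mpr (mod_cast hic)
  have hv : d + c + i ≤ v := by nlinarith
  have hflag : (0 : ℝ) < flagCount 𝓑 (d + i) i := mod_cast h.flagCount_pos hic.le hv
  have hvar := h.variance_meetCount
  have hcauchy := sq_sum_le_card_mul_sum_sq (s := L) (f := fun X => (meetCount 𝓑 (d + i + 1) X : ℝ))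
  have hconst := sq_sum_eq_card_mul_sum_sq_iff L (fun X => (meetCount 𝓑 (d + i + 1) X : ℝ))
  simp only [Nat.cast_inj] at hconst
  rw [exists_forall_mem_eq_iff, ← hconst]
  have hl : (0 : ℝ) < 4 * i ^ 2 * (i + 1) ^ 3 * (d + i + 1) * (d + 2 * i + 2) * (d + 2 * i) *
      (d + 2 * i + 1) := by positivity
  have hr : 0 < flagCount 𝓑 (d + i) i ^ 2 * (c - i : ℝ) * betaSlack c d i v := by positivity
  constructor
  · rw [← sub_nonneg] at hcauchy ⊢
    exact nonneg_of_mul_nonneg_right (hvar ▸ mul_nonneg hl.le hcauchy) hr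
  · rw [eq_comm, ← sub_eq_zero, ← mul_eq_zero_iff_left hr.ne', ← hvar,
      mul_eq_zero_iff_left hl.ne', sub_eq_zero, eq_comm]

end IsBetaDesign

end BetaDesign

/-- For `c > 2i + 1` the radicand of `γ₂` is negative, so that `√` takes its junk value `0`. -/
theorem beta_design_lower_bound_v_general {𝓑 : Finset (Finset α)} {v c d i : ℕ}
    (hB : IsBetaDesign 𝓑 v (d + c) d i) (hic : i < c) (hci : c ≤ 2 * i + 1)
    (hlb : (d + 2 * i) * c < i * v) :
    ((d + c : ℕ) : ℝ) + gammaTwo c d i ≤ v ∧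
      ((v : ℝ) = ((d + c : ℕ) : ℝ) + gammaTwo c d i ↔
        ∃ m, ∀ X ∈ S2 𝓑 d i, #{B ∈ 𝓑 | #(X ∩ B) = d + i + 1} = m) := by
  obtain ⟨hle, hiff⟩ := hB.gammaDisc_le_and_eq_iff hic hlb
  obtain ⟨hbound, heq⟩ := add_gammaTwo_le_and_eq_iff d.cast_nonneg (mod_cast hB.2.1)
    (mod_cast hic.le) (mod_cast hci) (sub_pos.mpr (mod_cast hlb)) hle
  rw [S2_eq_lightSets, Nat.cast_add]
  exact ⟨hbound, heq.trans hiff⟩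

/-- **Theorem 2.** Let `𝓑` be a `β(i)` design with parameter `(v, k, d)`, `v ≤ 2k`,
`k - d ≥ i + 1`, `c = k - d`, and suppose `v` does not achieve the lower bound
`(d + 2i)(k-d)/i`.  Then `v ≥ k + γ₂`, with equality if and only if the number of
blocks `B` with `|B ∩ X| = d + i + 1` does not depend on the choice of `X ∈ S₂`. -/
theorem beta_design_lower_bound_v (𝓑 : Finset (Finset α)) (v k d i c : ℕ)
    (hB : IsBetaDesign 𝓑 v k d i) (hv : v ≤ 2 * k) (hkd : i + 1 ≤ k - d) (hc : c = k - d)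
    (hlb : (d + 2 * i) * (k - d) < i * v)
    (γ₂ : ℝ)
    (hγ₂ : γ₂ = (2 * ((c : ℝ) - (i : ℝ)) * (d : ℝ) + 2 * (i : ℝ) * (c : ℝ)
        + 3 * (i : ℝ) + 1) / (2 * ((i : ℝ) + 1))
      + (1 / (2 * (i : ℝ) * ((i : ℝ) + 1))) * Real.sqrt
          (-4 * (i : ℝ) * ((c : ℝ) - (i : ℝ)) * ((c : ℝ) - 2 * (i : ℝ) - 1) * (d : ℝ) ^ 2
           - 4 * (i : ℝ) * (3 * (i : ℝ) + 1) * ((c : ℝ) - (i : ℝ))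
              * ((c : ℝ) - 2 * (i : ℝ) - 1) * (d : ℝ)
           - (i : ℝ) ^ 2 * (4 * (2 * (i : ℝ) + 1) * (c : ℝ) ^ 2
              - 4 * (2 * (i : ℝ) + 1) * (3 * (i : ℝ) + 1) * (c : ℝ)
              + 16 * (i : ℝ) ^ 3 + 15 * (i : ℝ) ^ 2 + 2 * (i : ℝ) - 1))) :
    (k : ℝ) + γ₂ ≤ (v : ℝ) ∧
    ((v : ℝ) = (k : ℝ) + γ₂ ↔ ∃ m : ℕ, ∀ X ∈ S2 𝓑 d i,
      (𝓑.filter (fun B => (X ∩ B).card = d + i + 1)).card = m) := by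
  obtain rfl : k = d + c := by omega
  subst hγ₂
  rw [Nat.add_sub_cancel_left] at hkd hlb
  exact beta_design_lower_bound_v_general hB hkd (by nlinarith) hlb
end
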